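/- Weak implies strong formulation: Let M ≥ 0, let u be continuous on Σ_N^+ with finite energy (u ∈ dom E), and let g be continuous with E(u,v) = −∫_{Σ_N^+} g v dμ for all v ∈ dom_M E. Then u ∈ D_M and Δu = g in the strong sense, i.e. lim_{m→∞} max_{p ∈ V_m ∖ V_M} |N^{m+1} H_m u(p) − g(p)| = 0. -/

import Mathlib

open Filter Topology MeasureTheory Finset Classical

noncomputable section

/-- The one-sided full shift space `Σ_N^+` on `N` symbols; coordinates are indexed
from `0`, so the paper's `x_1 x_2 ⋯` is `x 0, x 1, ⋯` here. It carries the product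
of the discrete topology on `Fin N`. -/
abbrev SSp (N : ℕ) : Type := ℕ → Fin N

/-- The level-`m` vertex set `V_m = {p : p_i = p_{i+1} for all i ≥ m+1}` (1-based),
i.e. the sequences that are constant from (0-based) coordinate `m` on.  It is
realized as a `Finset` via the parametrization by the first `m+1` coordinates;
see `mem_V` for the defining property. -/
noncomputable def V (N m : ℕ) : Finset (SSp N) :=
  (Finset.univ : Finset (Fin (m + 1) → Fin N)).image
    (fun w j => w ⟨min j m, by omega⟩)

lemma const_from (N m : ℕ) (p : SSp N) (h : ∀ i, m ≤ i → p i = p (i + 1)) :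
    ∀ j, m ≤ j → p j = p m := by
  intro j hj
  induction j with
  | zero => have : m = 0 := by omega
            simp [this]
  | succ k ih =>
      rcases Nat.lt_or_ge k m with hk | hk
      · have : m = k + 1 := by omega
        simp [this]
      · rw [← h k hk]
        exact ih hk

/-- Membership in `V N m` is exactly the paper's condition
`p_i = p_{i+1}` for all `i ≥ m+1` (1-based), i.e. `p i = p (i+1)` for all `i ≥ m`. -/
lemma mem_V {N m : ℕ} {p : SSp N} :
    p ∈ V N m ↔ ∀ i, m ≤ i → p i = p (i + 1) := by
  classical
  constructor
  · intro hp i hi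
    simp only [V, Finset.mem_image] at hp
    obtain ⟨w, -, rfl⟩ := hp
    have h1 : min i m = m := by omega
    have h2 : min (i + 1) m = m := by omega
    simp [h1, h2]
  · intro h
    simp only [V, Finset.mem_image]
    refine ⟨fun j => p j, Finset.mem_univ _, ?_⟩
    funext j
    rcases Nat.lt_or_ge j m with hj | hj
    · have : min j m = j := by omega
      simp [this]
    · have : min j m = m := by omega
      simp only [this]
      exact (const_from N m p h j hj).symm

/-- The deleted neighbourhood `U_{p,m} = {q ∈ V_m : q ≠ p, q_i = p_i for 1 ≤ i ≤ m}`
(1-based), i.e. `q` agrees with `p` on the first `m` (0-based: `i < m`) coordinates. -/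
noncomputable def U (N m : ℕ) (p : SSp N) : Finset (SSp N) :=
  (V N m).filter (fun q => q ≠ p ∧ ∀ i, i < m → q i = p i)

/-- `κ_p = min {j : p ∈ V_j}`. -/
noncomputable def kappa (N : ℕ) (p : SSp N) : ℕ := sInf {j | p ∈ V N j}

/-- The difference operator
`H_m u (p) = Σ_{i = κ_p}^{m} Σ_{q ∈ U_{p,i}} (u(q) − u(p))`. -/
noncomputable def H (N m : ℕ) (u : SSp N → ℝ) (p : SSp N) : ℝ :=
  ∑ i ∈ Finset.Icc (kappa N p) m, ∑ q ∈ U N i p, (u q - u p)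

/-- The Dirichlet form `E_{H_m}(u, v) = − Σ_{p ∈ V_m} u(p) · H_m v(p)`. -/
noncomputable def EH (N m : ℕ) (u v : SSp N → ℝ) : ℝ :=
  -∑ p ∈ V N m, u p * H N m v p

/-- The cylinder set `[p_1 ⋯ p_m]`, determined by the first `m` coordinates of `p`. -/
def cyl (N m : ℕ) (p : SSp N) : Set (SSp N) := {x | ∀ i, i < m → x i = p i}

/-- `χ_p^m` : the indicator function of the cylinder set `[p_1 ⋯ p_{m+1}]`. -/
noncomputable def chi (N m : ℕ) (p : SSp N) : SSp N → ℝ :=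
  (cyl N (m + 1) p).indicator 1

/-- `u ∈ dom E`: `u` is continuous and the energy
`E(u) = lim_m E_{H_m}(u|_{V_m})` exists (and is finite). -/
def MemDomE (N : ℕ) (u : SSp N → ℝ) : Prop :=
  Continuous u ∧ ∃ L : ℝ, Tendsto (fun m => EH N m u u) atTop (nhds L)

/-- `v ∈ dom_M E`: `v` has finite energy and vanishes on the boundary `V_M`. -/
def MemDomME (N M : ℕ) (v : SSp N → ℝ) : Prop :=
  MemDomE N v ∧ ∀ p ∈ V N M, v p = 0

/-- `u ∈ 𝒟_M` with `Δ u = f` (strong formulation with boundary `V_M`):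
`u` and `f` are continuous and
`lim_{m → ∞} max_{p ∈ V_m ∖ V_M} |N^{m+1} H_m u(p) − f(p)| = 0`. -/
def IsLaplacianOn (N M : ℕ) (u f : SSp N → ℝ) : Prop :=
  Continuous u ∧ Continuous f ∧
    ∀ ε : ℝ, 0 < ε → ∃ m₀ : ℕ, ∀ m, m₀ ≤ m → ∀ p ∈ V N m, p ∉ V N M →
      |(N : ℝ) ^ (m + 1) * H N m u p - f p| < ε

/-- `u ∈ D_μ` with `Δ u = f` (original definition of the Laplacian):
`u` and `f` are continuous and
`lim_{m → ∞} max_{p ∈ V_m ∖ V_{m−1}} |N^{m+1} H_m u(p) − f(p)| = 0`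
(the level is written `m+1` to avoid natural subtraction). -/
def IsLaplacianDmu (N : ℕ) (u f : SSp N → ℝ) : Prop :=
  Continuous u ∧ Continuous f ∧
    ∀ ε : ℝ, 0 < ε → ∃ m₀ : ℕ, ∀ m, m₀ ≤ m → ∀ p ∈ V N (m + 1), p ∉ V N m →
      |(N : ℝ) ^ (m + 2) * H N (m + 1) u p - f p| < ε

/-- `μ` is the equidistributed Bernoulli measure:
`μ([p_1 ⋯ p_m]) = N^{−m}` for every cylinder set. -/
def IsBernoulli (N : ℕ) (μ : Measure (SSp N)) : Prop :=
  ∀ (m : ℕ) (p : SSp N), μ (cyl N m p) = (N : ENNReal)⁻¹ ^ m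

/-- `ρ(x,y) = min {i : x_i ≠ y_i}` (1-based; `0`-based first disagreement plus one). -/
noncomputable def rho (N : ℕ) (x y : SSp N) : ℕ := sInf {i | x i ≠ y i} + 1

/-- The matrix `(G_m)_{pq}`: `2/N` if `q = p`, `1/N` if `q ∈ U_{p,m}`, `0` otherwise. -/
noncomputable def Gmat (N m : ℕ) (p q : SSp N) : ℝ :=
  if q = p then 2 / N else if q ∈ U N m p then 1 / N else 0

/-- The Green's function
`g(x,y) = Σ_{m=1}^{ρ(x,y)−1} Σ_{r,s ∈ V_m ∖ V_{m−1}} (G_m)_{rs} χ_r^m(x) χ_s^m(y)`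
for `ρ(x,y) > 1`, and `g(x,y) = 0` for `ρ(x,y) = 1` (the sum is then empty). -/
noncomputable def greenFn (N : ℕ) (x y : SSp N) : ℝ :=
  ∑ m ∈ Finset.Icc 1 (rho N x y - 1),
    ∑ r ∈ (V N m).filter (fun r => r ∉ V N (m - 1)),
      ∑ s ∈ (V N m).filter (fun s => s ∉ V N (m - 1)),
        Gmat N m r s * chi N m r x * chi N m s y

/-- The Green's operator `G_μ f (x) = ∫_{Σ_N^+ ∖ {x}} g(x,y) f(y) dμ(y)`. -/
noncomputable def Gop (N : ℕ) (μ : Measure (SSp N)) (f : SSp N → ℝ) (x : SSp N) : ℝ :=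
  ∫ y in ({x}ᶜ : Set (SSp N)), greenFn N x y * f y ∂μ

/-!
The cylinder indicator `χ_p^m` is a test function that isolates `H_m u(p)`. It depends on the first
`m + 1` coordinates only, and points of `U_{q,i}` agree with `q` on the first `i` coordinates, so
levels `i > m` contribute nothing to `E_{H_n}(u, χ_p^m)`; on `V_m` it is the indicator of `p`, so
the symmetry of the form gives `E(u, χ_p^m) = E_{H_m}(χ_p^m, u) = -H_m u(p)`. Comparing with the
weak formulation, `N^{m+1} H_m u(p)` is the `μ`-average of `g` over the cylinder `[p_1 ⋯ p_{m+1}]`,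
which is uniformly close to `g(p)` because `g` is uniformly continuous.
-/

lemma isLocallyConstant_of_dependsOn {ι Y : Type*} {X : ι → Type*} [∀ i, TopologicalSpace (X i)]
    [∀ i, DiscreteTopology (X i)] {s : Set ι} (hs : s.Finite) {f : (∀ i, X i) → Y}
    (hf : DependsOn f s) : IsLocallyConstant f := by
  refine (IsLocallyConstant.iff_eventually_eq f).2 fun x => ?_
  have hagree : ∀ᶠ y in 𝓝 x, ∀ i ∈ s, y i = x i :=
    (eventually_all_finite hs).2 fun i _ =>
      (continuous_apply i).continuousAt.preimage_mem_nhds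
        (mem_nhds_discrete.2 (Set.mem_singleton (x i)))
  exact hagree.mono fun y hy => hf hy

lemma eventually_dist_lt_of_mem_cylinder {E : ℕ → Type*} [∀ n, TopologicalSpace (E n)]
    [∀ n, DiscreteTopology (E n)] [CompactSpace (∀ n, E n)] {Y : Type*} [PseudoMetricSpace Y]
    {g : (∀ n, E n) → Y} (hg : Continuous g) {ε : ℝ} (hε : 0 < ε) :
    ∀ᶠ m in atTop, ∀ p, ∀ x ∈ PiNat.cylinder p m, dist (g x) (g p) < ε := by
  let _ : MetricSpace (∀ n, E n) := PiNat.metricSpace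
  have huc : UniformContinuous g := CompactSpace.uniformContinuous_of_continuous hg
  obtain ⟨δ, hδ, hclose⟩ := Metric.uniformContinuous_iff.1 huc ε hε
  obtain ⟨m₀, hm₀⟩ := exists_pow_lt_of_lt_one hδ (one_half_lt_one (α := ℝ))
  filter_upwards [eventually_ge_atTop m₀] with m hm p x hx
  exact hclose ((PiNat.mem_cylinder_iff_dist_le.1 (PiNat.cylinder_anti p hm hx)).trans_lt hm₀)

section Energy

variable {N m n i : ℕ} {p q : SSp N} {u v : SSp N → ℝ}

lemma V_mono (N : ℕ) : Monotone (V N) :=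
  fun _ _ hmn _ hp => mem_V.2 fun i hi => mem_V.1 hp i (hmn.trans hi)

lemma eq_of_mem_V_of_mem_cyl (hp : p ∈ V N m) (hq : q ∈ V N m) (hqp : q ∈ cyl N (m + 1) p) :
    q = p := by
  funext j
  rcases Nat.lt_or_ge j (m + 1) with hj | hj
  · exact hqp j hj
  · have hmj : m ≤ j := by omega
    rw [const_from N m q (mem_V.1 hq) j hmj, const_from N m p (mem_V.1 hp) j hmj]
    exact hqp m m.lt_succ_self

lemma kappa_le_iff (hp : p ∈ V N n) : kappa N p ≤ i ↔ p ∈ V N i :=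
  ⟨fun h => V_mono N h (Nat.sInf_mem (s := {j | p ∈ V N j}) ⟨n, hp⟩), fun h => Nat.sInf_le h⟩

lemma mem_U : q ∈ U N i p ↔ q ∈ V N i ∧ q ≠ p ∧ ∀ j < i, q j = p j := by
  simp only [U, Finset.mem_filter]

lemma mem_V_and_mem_U_comm : p ∈ V N i ∧ q ∈ U N i p ↔ p ∈ U N i q ∧ q ∈ V N i := by
  simp only [mem_U, ne_comm (a := p), eq_comm (a := p _)]
  tauto

/-- The summand of `H_m u(p)` at level `i`: the graph Laplacian of the graph on `V_i` in which the
neighbours of `p` are the points of `U_{p,i}`. -/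
def levelLaplacian (N i : ℕ) (u : SSp N → ℝ) (p : SSp N) : ℝ :=
  ∑ q ∈ U N i p, (u q - u p)

lemma sum_mul_levelLaplacian_comm (N i : ℕ) (u v : SSp N → ℝ) :
    ∑ p ∈ V N i, u p * levelLaplacian N i v p = ∑ p ∈ V N i, v p * levelLaplacian N i u p := by
  have hcross : ∑ p ∈ V N i, ∑ q ∈ U N i p, u p * v q = ∑ p ∈ V N i, ∑ q ∈ U N i p, v p * u q := by
    rw [Finset.sum_comm' fun _ _ => mem_V_and_mem_U_comm]
    simp only [mul_comm]
  simp only [levelLaplacian, Finset.mul_sum, mul_sub, Finset.sum_sub_distrib]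
  rw [hcross]
  simp only [mul_comm (u _) (v _)]

lemma EH_eq_neg_sum_levelLaplacian (N n : ℕ) (u v : SSp N → ℝ) :
    EH N n u v =
      -∑ i ∈ Finset.range (n + 1), ∑ p ∈ V N i, u p * levelLaplacian N i v p := by
  have hmem (p : SSp N) (i : ℕ) : p ∈ V N n ∧ i ∈ Finset.Icc (kappa N p) n ↔
      p ∈ V N i ∧ i ∈ Finset.range (n + 1) := by
    rw [Finset.mem_Icc, Finset.mem_range_succ_iff]
    constructor
    · rintro ⟨hp, hκ, hin⟩
      exact ⟨(kappa_le_iff hp).1 hκ, hin⟩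
    · rintro ⟨hp, hin⟩
      exact ⟨V_mono N hin hp, (kappa_le_iff hp).2 hp, hin⟩
  rw [EH, ← Finset.sum_comm' hmem]
  simp only [H, levelLaplacian, Finset.mul_sum]

lemma EH_comm (N n : ℕ) (u v : SSp N → ℝ) : EH N n u v = EH N n v u := by
  simp only [EH_eq_neg_sum_levelLaplacian, sum_mul_levelLaplacian_comm N _ u v]

lemma levelLaplacian_eq_zero_of_dependsOn (hv : DependsOn v (Set.Iio i)) (p : SSp N) :
    levelLaplacian N i v p = 0 :=
  Finset.sum_eq_zero fun _ hq => sub_eq_zero.2 (hv (mem_U.1 hq).2.2)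

lemma EH_eq_of_dependsOn (hv : DependsOn v (Set.Iio (m + 1))) (hmn : m ≤ n) (u : SSp N → ℝ) :
    EH N n u v = EH N m u v := by
  rw [EH_eq_neg_sum_levelLaplacian, EH_eq_neg_sum_levelLaplacian, neg_inj]
  symm
  refine Finset.sum_subset (Finset.range_mono (by omega)) fun i _ hi => ?_
  have hmi : m + 1 ≤ i := by simpa only [Finset.mem_range, not_lt] using hi
  refine Finset.sum_eq_zero fun p _ => ?_
  rw [levelLaplacian_eq_zero_of_dependsOn (hv.mono (Set.Iio_subset_Iio hmi)), mul_zero]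

lemma tendsto_EH_of_dependsOn (hv : DependsOn v (Set.Iio (m + 1))) (u : SSp N → ℝ) :
    Tendsto (fun n => EH N n u v) atTop (𝓝 (EH N m u v)) :=
  tendsto_atTop_of_eventually_const fun _ hmn => EH_eq_of_dependsOn hv hmn u

lemma memDomE_of_dependsOn (hv : DependsOn v (Set.Iio (m + 1))) : MemDomE N v :=
  ⟨(isLocallyConstant_of_dependsOn (Set.finite_Iio _) hv).continuous, _,
    tendsto_EH_of_dependsOn hv v⟩

end Energy

section TestFunction

variable {N m M : ℕ} {p q : SSp N}

lemma dependsOn_chi (N m : ℕ) (p : SSp N) : DependsOn (chi N m p) (Set.Iio (m + 1)) := by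
  intro x y hxy
  have hmem : x ∈ cyl N (m + 1) p ↔ y ∈ cyl N (m + 1) p :=
    forall₂_congr fun j hj => by rw [hxy j hj]
  simp only [chi, Set.indicator_apply, hmem, Pi.one_apply]

lemma chi_eq_ite (hp : p ∈ V N m) (hq : q ∈ V N m) : chi N m p q = if q = p then 1 else 0 := by
  have hmem : q ∈ cyl N (m + 1) p ↔ q = p :=
    ⟨eq_of_mem_V_of_mem_cyl hp hq, fun h _ _ => congrFun h _⟩
  simp only [chi, Set.indicator_apply, hmem, Pi.one_apply]

lemma memDomME_chi (hMm : M ≤ m) (hp : p ∈ V N m) (hpM : p ∉ V N M) :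
    MemDomME N M (chi N m p) := by
  refine ⟨memDomE_of_dependsOn (dependsOn_chi N m p), fun q hq => ?_⟩
  rw [chi_eq_ite hp (V_mono N hMm hq), if_neg (ne_of_mem_of_not_mem hq hpM)]

lemma EH_chi (hp : p ∈ V N m) (u : SSp N → ℝ) : EH N m u (chi N m p) = -H N m u p := by
  rw [EH_comm, EH, neg_inj, Finset.sum_eq_single_of_mem p hp]
  · rw [chi_eq_ite hp hp, if_pos rfl, one_mul]
  · intro q hq hqp
    rw [chi_eq_ite hp hq, if_neg hqp, zero_mul]

lemma measurableSet_cyl (N m : ℕ) (p : SSp N) : MeasurableSet (cyl N m p) :=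
  (PiNat.isOpen_cylinder (E := fun _ => Fin N) p m).measurableSet

lemma integral_mul_chi (μ : Measure (SSp N)) (g : SSp N → ℝ) (m : ℕ) (p : SSp N) :
    ∫ x, g x * chi N m p x ∂μ = ∫ x in cyl N (m + 1) p, g x ∂μ := by
  rw [← integral_indicator (measurableSet_cyl N (m + 1) p)]
  simp only [chi, Set.indicator_apply, Pi.one_apply, mul_ite, mul_one, mul_zero]

lemma H_eq_setIntegral {μ : Measure (SSp N)} {u g : SSp N → ℝ} (hp : p ∈ V N m)
    (hweak : Tendsto (fun n => EH N n u (chi N m p)) atTop (𝓝 (-∫ x, g x * chi N m p x ∂μ))) :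
    H N m u p = ∫ x in cyl N (m + 1) p, g x ∂μ := by
  have hlim : EH N m u (chi N m p) = -∫ x, g x * chi N m p x ∂μ :=
    tendsto_nhds_unique (tendsto_EH_of_dependsOn (dependsOn_chi N m p) u) hweak
  rwa [EH_chi hp, integral_mul_chi, neg_inj] at hlim

end TestFunction

section Bernoulli

variable {N : ℕ} {μ : Measure (SSp N)}

lemma setAverage_cyl (hμ : IsBernoulli N μ) (g : SSp N → ℝ) (m : ℕ) (p : SSp N) :
    ⨍ x in cyl N m p, g x ∂μ = (N : ℝ) ^ m * ∫ x in cyl N m p, g x ∂μ := by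
  simp [setAverage_eq, measureReal_def, hμ m p]

lemma dist_setAverage_cyl_le (hμ : IsBernoulli N μ) {g : SSp N → ℝ} (hg : Continuous g) {m : ℕ}
    {p : SSp N} {a r : ℝ} (hclose : ∀ x ∈ cyl N m p, dist (g x) a ≤ r) :
    dist (⨍ x in cyl N m p, g x ∂μ) a ≤ r := by
  have hN : N ≠ 0 := (p 0).pos.ne'
  have hne : μ (cyl N m p) ≠ 0 := by simp [hμ m p]
  have hfin : μ (cyl N m p) ≠ ⊤ := by simp [hμ m p, hN]
  have : IsFiniteMeasure (μ.restrict (cyl N m p)) := isFiniteMeasure_restrict.2 hfin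
  have hgint : IntegrableOn g (cyl N m p) μ :=
    hg.integrable_of_hasCompactSupport (HasCompactSupport.of_compactSpace g)
  exact (convex_closedBall a r).set_average_mem Metric.isClosed_closedBall hne hfin
    (ae_restrict_of_forall_mem (measurableSet_cyl N m p) hclose) hgint

theorem statement8_general (hμ : IsBernoulli N μ) {M : ℕ} {u g : SSp N → ℝ}
    (hu : Continuous u) (hg : Continuous g)
    (hweak : ∀ m, M ≤ m → ∀ p ∈ V N m, p ∉ V N M →
      Tendsto (fun n => EH N n u (chi N m p)) atTop (𝓝 (-∫ x, g x * chi N m p x ∂μ))) :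
    IsLaplacianOn N M u g := by
  refine ⟨hu, hg, fun ε hε => ?_⟩
  obtain ⟨m₀, hosc⟩ := eventually_atTop.1 (eventually_dist_lt_of_mem_cylinder hg (half_pos hε))
  refine ⟨max m₀ M, fun m hm p hp hpM => ?_⟩
  obtain ⟨hm₀, hMm⟩ := max_le_iff.1 hm
  rw [H_eq_setIntegral hp (hweak m hMm p hp hpM), ← setAverage_cyl hμ, ← Real.dist_eq]
  have hclose : ∀ x ∈ cyl N (m + 1) p, dist (g x) (g p) ≤ ε / 2 :=
    fun x hx => (hosc (m + 1) (by omega) p x hx).le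
  exact (dist_setAverage_cyl_le hμ hg hclose).trans_lt (half_lt_self hε)

end Bernoulli

/-- weak implies strong: if `u ∈ dom E`, `g` is continuous and
`E(u,v) = −∫ g v dμ` for all `v ∈ dom_M E`, then `u ∈ 𝒟_M` and `Δu = g` in the
strong sense. -/
theorem statement8 (N : ℕ) (hN : 2 ≤ N)
    (μ : Measure (SSp N)) [IsProbabilityMeasure μ] (hμ : IsBernoulli N μ)
    (M : ℕ) (u : SSp N → ℝ) (hu : MemDomE N u) (g : SSp N → ℝ) (hg : Continuous g)
    (hweak : ∀ v : SSp N → ℝ, MemDomME N M v →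
      Tendsto (fun m => EH N m u v) atTop (nhds (-∫ x, g x * v x ∂μ))) :
    IsLaplacianOn N M u g :=
  statement8_general hμ hu.1 hg fun _ hMm _ hp hpM => hweak _ (memDomME_chi hMm hp hpM)
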